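/- If every finitely generated subgroup of a group G is sofic, then G is sofic. (In particular, the class of sofic groups is closed under direct limits.) -/

import Mathlib

/-!
An `(F, ε)`-quasi-action constrains only finitely many products, so it can be pulled back along any
map that behaves on `F` like an embedding of groups. When `F` generates the subgroup `H`, every
set-theoretic retraction `G → H` is such a map.
-/

/-- Two self-maps of a finite set `A` are `ε`-similar if the number of points where they
differ is at most `ε·|A|`. They are `(1-ε)`-different if they are not `(1-ε)`-similar. -/
def EpsSimilar {A : Type*} [Fintype A] (ε : ℝ) (e f : A → A) : Prop :=
  (Nat.card {a : A // e a ≠ f a} : ℝ) ≤ ε * Fintype.card A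

/-- An `(F, ε)`-quasi-action of a group `G` on a finite set `A`:
(a) `φ(ef)` is `ε`-similar to `φ(e)` followed by `φ(f)` for `e, f ∈ F`;
(b) `φ(1)` is `ε`-similar to the identity;
(c) for `1 ≠ e ∈ F`, `φ(e)` is `(1-ε)`-different from the identity. -/
def IsQuasiAction {G : Type*} [Group G] (F : Finset G) (ε : ℝ)
    {A : Type*} [Fintype A] (φ : G → A → A) : Prop :=
  (∀ e ∈ F, ∀ f ∈ F, EpsSimilar ε (φ (e * f)) (fun a => φ f (φ e a))) ∧
  EpsSimilar ε (φ 1) id ∧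
  (∀ e ∈ F, e ≠ 1 → ¬ EpsSimilar (1 - ε) (φ e) id)

/-- A group `G` is sofic if for every finite subset `F ⊆ G` and every `ε ∈ (0,1)` there is an
`(F, ε)`-quasi-action of `G` on some finite nonempty set. -/
def IsSofic (G : Type*) [Group G] : Prop :=
  ∀ (F : Finset G) (ε : ℝ), 0 < ε → ε < 1 →
    ∃ (A : Type) (_ : Fintype A) (_ : Nonempty A) (φ : G → A → A),
      IsQuasiAction F ε φ

/-- `θ` is a local embedding on `F` if it sends `1` to `1`, is multiplicative on pairs from `F` and
kills no nontrivial element of `F`. This is the comparison map along which quasi-actions are pulled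
back. Injectivity on `F` is encoded only through the kernel; for a finite subset of a group, the two
versions agree after enlarging `F`. -/
structure IsLocalEmbedding {G H : Type*} [MulOneClass G] [MulOneClass H] (F : Set G)
    (θ : G → H) : Prop where
  map_one : θ 1 = 1
  map_mul : ∀ e ∈ F, ∀ f ∈ F, θ (e * f) = θ e * θ f
  map_ne_one : ∀ e ∈ F, e ≠ 1 → θ e ≠ 1

theorem IsLocalEmbedding.of_leftInverse {G H : Type*} [MulOneClass G] [MulOneClass H] {f : H →* G}
    {θ : G → H} (hθ : Function.LeftInverse θ f) {F : Set G} (hF : F ⊆ Set.range f) :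
    IsLocalEmbedding F θ where
  map_one := by rw [← _root_.map_one f, hθ]
  map_mul e he e' he' := by
    obtain ⟨x, rfl⟩ := hF he
    obtain ⟨y, rfl⟩ := hF he'
    rw [← _root_.map_mul f, hθ, hθ, hθ]
  map_ne_one e he hne := by
    obtain ⟨x, rfl⟩ := hF he
    rw [hθ]
    rintro rfl
    exact hne (_root_.map_one f)

theorem IsQuasiAction.comp_isLocalEmbedding {G H A : Type*} [Group G] [Group H] [Fintype A]
    {F : Finset G} {K : Finset H} {ε : ℝ} {ψ : H → A → A} {θ : G → H} (hψ : IsQuasiAction K ε ψ)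
    (hθ : IsLocalEmbedding (F : Set G) θ) (hFK : Set.MapsTo θ F K) :
    IsQuasiAction F ε (ψ ∘ θ) := by
  obtain ⟨hmul, hone, hne⟩ := hψ
  refine ⟨fun e he f hf => ?_, ?_, fun e he he1 => ?_⟩
  · simpa only [Function.comp_apply, hθ.map_mul e he f hf] using hmul _ (hFK he) _ (hFK hf)
  · simpa only [Function.comp_apply, hθ.map_one] using hone
  · exact hne _ (hFK he) (hθ.map_ne_one e he he1)

/-- Since `θ` need not come from a subgroup of `G`, this also applies to direct limits along
non-injective homomorphisms, with `θ` choosing representatives at a sufficiently late stage. -/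
theorem isSofic_of_fg_subgroups_general.{u, v} {G : Type u} [Group G]
    (h : ∀ F : Finset G, ∃ (H : Type v) (_ : Group H) (θ : G → H),
      IsSofic H ∧ IsLocalEmbedding (F : Set G) θ) : IsSofic G := by
  classical
  intro F ε hε₀ hε₁
  obtain ⟨H, _, θ, hH, hθ⟩ := h F
  obtain ⟨A, hA, hA', ψ, hψ⟩ := hH (F.image θ) ε hε₀ hε₁
  exact ⟨A, hA, hA', ψ ∘ θ,
    hψ.comp_isLocalEmbedding hθ fun _ hg => Finset.mem_image_of_mem θ hg⟩

/-- If every finitely generated subgroup of `G` is sofic, then `G` is sofic. -/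
theorem isSofic_of_fg_subgroups {G : Type*} [Group G]
    (h : ∀ H : Subgroup G, H.FG → IsSofic H) : IsSofic G := by
  refine isSofic_of_fg_subgroups_general fun F => ?_
  let H := Subgroup.closure (F : Set G)
  have hF : (F : Set G) ⊆ Set.range H.subtype := by
    rw [Subgroup.coe_subtype, Subtype.range_coe]
    exact Subgroup.subset_closure
  exact ⟨H, inferInstance, Function.invFun H.subtype, h H ⟨F, rfl⟩,
    .of_leftInverse (Function.leftInverse_invFun H.subtype_injective) hF⟩
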